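/- Let k ≥ 2, n ≥ 1, κ̄ = ⌈k/2⌉, and 𝓛 = I_n ⊗ L_A^{(k)} + Σ_{i=1}^{n−1} z_i z_iᵀ with z_i = e_{ik} − e_{ik+κ̄}. Then all nk eigenvalues of the real symmetric matrix 𝓛 are distinct, i.e., every eigenvalue of 𝓛 is simple. -/

import Mathlib

/-!
`𝓛` is symmetric, so it suffices that its eigenspaces are one-dimensional, and for that it is enough
to find, for each `μ`, one coordinate at which no nonzero eigenvector for `μ` vanishes
(`eigenspace_coord`).

Write `x_i` for the part of an eigenvector `x` on copy `i` and `D_i` for the difference of `x` across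
the edge joining copies `i - 1` and `i`, with `D_i = 0` at the free ends of the chain. The equation
`𝓛 x = μ x` says `(L_A - μ) x_i = D_i e_κ̄ - D_{i+1} e_k` for all `i`. Two facts about a single
antiregular graph are needed.

* `antireg_center`: an eigenvector of `L_A` vanishing at `κ̄` is zero.
* `antireg_terminal`: if `(L_A - μ) w = d e_κ̄` and `w` vanishes at the terminal vertex `k`, then
  `d = 0`, so `w` is zero or an eigenvector of `L_A`.

If `L_A` has an eigenvector `u` for `μ` that vanishes at `k`, then `u` is nonzero at `κ̄`, and pairing
the block equations with `u` gives `D_i = 0` for all `i`. Every `x_i` then satisfies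
`L_A x_i = μ x_i`, and if `x` vanishes at vertex `κ̄` of the first copy, then `x_1 = 0`, hence `x_2`
vanishes at `κ̄` because `D_2 = 0`, hence `x_2 = 0`, and so on. If there is no such `u` and `x`
vanishes at vertex `k` of the last copy, then `antireg_terminal` gives `x_n = 0` and `D_n = 0`, so
`x_{n-1}` vanishes at `k`, and the argument repeats down to the first copy.
-/

/-- Laplacian matrix of the `k`-vertex antiregular graph (0-indexed vertices;
1-indexed vertices `i+1`, `j+1` adjacent iff `(i+1)+(j+1) ≤ k+1`). -/
def antiregLap (k : ℕ) : Matrix (Fin k) (Fin k) ℝ :=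
  Matrix.of fun i j =>
    if i = j then
      ((Finset.univ.filter fun m : Fin k => m ≠ i ∧ i.val + m.val + 2 ≤ k + 1).card : ℝ)
    else if i.val + j.val + 2 ≤ k + 1 then -1 else 0

/-- The vector `z_i = e_{ik} - e_{ik+κ̄}` (1-indexed, `κ̄ = ⌈k/2⌉`, `i = p+1`),
on the product index set: copy `p`, vertex `k` minus copy `p+1`, vertex `κ̄`. -/
def zvec (n k : ℕ) (hk : 2 ≤ k) (p : Fin (n - 1)) : Fin n × Fin k → ℝ :=
  fun q =>
    (if q = (⟨p.val, by have := p.isLt; omega⟩, ⟨k - 1, by omega⟩) then (1 : ℝ) else 0) -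
    (if q = (⟨p.val + 1, by have := p.isLt; omega⟩, ⟨(k + 1) / 2 - 1, by omega⟩) then 1 else 0)

/-- `L̄ = I_n ⊗ L_A^{(k)}`, the Laplacian of `n` disjoint copies of the
`k`-vertex antiregular graph, indexed by (copy, vertex). -/
def copiesLap (n k : ℕ) : Matrix (Fin n × Fin k) (Fin n × Fin k) ℝ :=
  Matrix.kroneckerMap (· * ·) (1 : Matrix (Fin n) (Fin n) ℝ) (antiregLap k)

/-- `𝓛 = I_n ⊗ L_A^{(k)} + Σ_{i=1}^{n-1} z_i z_iᵀ`, the Laplacian of `n`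
interconnected copies of the `k`-vertex antiregular graph. -/
def interLap (n k : ℕ) (hk : 2 ≤ k) : Matrix (Fin n × Fin k) (Fin n × Fin k) ℝ :=
  copiesLap n k + ∑ p : Fin (n - 1), Matrix.vecMulVec (zvec n k hk p) (zvec n k hk p)

/-! ### The antiregular Laplacian on sequences -/

/-- Symmetry of the adjacency form of the antiregular graph with loops, in which `j` and `l`
(0-indexed) are joined iff `j + l < k`. -/
lemma antireg_sum_symm (k : ℕ) (u w : ℕ → ℝ) :
    ∑ j ∈ Finset.range k, u j * ∑ l ∈ Finset.range (k - j), w l =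
      ∑ j ∈ Finset.range k, w j * ∑ l ∈ Finset.range (k - j), u l := by
  simp only [Finset.mul_sum]
  rw [Finset.sum_comm' (t' := Finset.range k) (s' := fun l => Finset.range (k - l))]
  · exact Finset.sum_congr rfl fun _ _ => Finset.sum_congr rfl fun _ _ => mul_comm _ _
  · intro a b; simp only [Finset.mem_range]; omega

/-- Entry `j` (0-indexed) of `(L_A - μ) w`, for `w` given as a sequence of which only the first `k`
terms matter. -/
def rowA (k : ℕ) (μ : ℝ) (w : ℕ → ℝ) (j : ℕ) : ℝ :=
  ((k : ℝ) - j - μ) * w j - ∑ l ∈ Finset.range (k - j), w l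

lemma rowA_pair (k : ℕ) (μ : ℝ) (u w : ℕ → ℝ) :
    ∑ j ∈ Finset.range k, u j * rowA k μ w j = ∑ j ∈ Finset.range k, w j * rowA k μ u j := by
  simp only [rowA, mul_sub, Finset.sum_sub_distrib]
  rw [antireg_sum_symm]
  congr 1
  exact Finset.sum_congr rfl fun _ _ => by ring

/-- The columns of `L_A` sum to zero. -/
lemma sum_rowA (k : ℕ) (μ : ℝ) (w : ℕ → ℝ) :
    ∑ j ∈ Finset.range k, rowA k μ w j = -μ * ∑ j ∈ Finset.range k, w j := by
  have h := rowA_pair k μ (fun _ => 1) w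
  simp only [one_mul] at h
  rw [h, Finset.mul_sum]
  refine Finset.sum_congr rfl fun j hj => ?_
  have hj' : j ≤ k := (Finset.mem_range.1 hj).le
  simp only [rowA, Finset.sum_const, Finset.card_range, nsmul_eq_mul, Nat.cast_sub hj']
  ring

lemma eq_of_step (x : ℕ → ℝ) (a b : ℕ) (h : ∀ p, a ≤ p → p + 1 < b → x p = x (p + 1)) :
    ∀ p, a ≤ p → p < b → x p = x a := by
  intro p hp
  induction p, hp using Nat.le_induction with
  | base => intro _; rfl
  | succ p hp ih => intro hb; rw [← h p hp hb]; exact ih (by omega)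

/-! ### Eigenvectors of one antiregular graph -/

/-- No eigenvector of `L_A` vanishes at the degree-repeating vertex.

With partial sums `S`, the eigenvector equations read `(q - μ) x_p = S_q` for `p + q = k`. They imply
`(p - μ) S_q = (q - μ) S_p`, hence `x_p = x_{p+1}` unless `μ ∈ {p + 1, k - p - 1, k - p}`. If `μ` is
not one of `1, …, k`, then `x` is constant. If `μ = t`, then `x` is constant on each of four
consecutive intervals, one of them a singleton; vanishing at the degree-repeating vertex, equality
of the first and last entries (for `1 < t < k`) and `S_t = S_k = 0` force the constants to vanish.
Vertices are 0-indexed. -/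
lemma antireg_center (k : ℕ) (hk : 1 ≤ k) (μ : ℝ) (x : ℕ → ℝ)
    (H : ∀ j < k, rowA k μ x j = 0) (hc : x ((k + 1) / 2 - 1) = 0) : ∀ j < k, x j = 0 := by
  obtain ⟨S, hSdef⟩ : ∃ S : ℕ → ℝ, ∀ m, S m = ∑ l ∈ Finset.range m, x l := ⟨_, fun _ => rfl⟩
  have S0 : S 0 = 0 := by simp [hSdef]
  have Ss : ∀ m, S (m + 1) = S m + x m := fun m => by simp [hSdef, Finset.sum_range_succ]
  have H1 : ∀ p q : ℕ, p + q = k → 0 < q → ((q : ℝ) - μ) * x p = S q := by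
    intro p q hpq hq
    have h := H p (by omega)
    have e : k - p = q := by omega
    rw [rowA, e, ← hSdef] at h
    have : (k : ℝ) = p + q := by rw [← hpq]; push_cast; ring
    rw [this] at h; linarith
  -- `(p - μ) S_q - (q - μ) S_p` is constant along `p + q = k` and changes sign when `p` and `q` are
  -- swapped, so it vanishes.
  have Δstep : ∀ p q : ℕ, p + 1 + q = k →
      ((p : ℝ) - μ) * S (q + 1) - ((q + 1 : ℝ) - μ) * S p =
      ((p + 1 : ℝ) - μ) * S q - ((q : ℝ) - μ) * S (p + 1) := by
    intro p q h
    have h1 := H1 p (q + 1) (by omega) (by omega)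
    have h2 := H1 q (p + 1) (by omega) (by omega)
    rw [Ss] at h1 h2 ⊢
    rw [Ss]
    push_cast at h1 h2
    linear_combination h1 + h2
  have Δ0 : ∀ p q : ℕ, p + q = k →
      ((p : ℝ) - μ) * S q - ((q : ℝ) - μ) * S p = (0 - μ) * S k := by
    intro p
    induction p with
    | zero => intro q h; obtain rfl : q = k := by omega
              rw [S0]; push_cast; ring
    | succ p ih =>
      intro q h
      have h1 := ih (q + 1) (by omega)
      have h2 := Δstep p q h
      push_cast at h1 ⊢
      linarith
  have hSk : μ * S k = 0 := by
    have := Δ0 k 0 (by omega)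
    rw [S0] at this; push_cast at this; linarith
  have Δ : ∀ p q : ℕ, p + q = k → ((p : ℝ) - μ) * S q = ((q : ℝ) - μ) * S p := by
    intro p q h; have := Δ0 p q h; linarith
  have link1 : ∀ p q : ℕ, p + 1 + q = k →
      ((p + 1 : ℝ) - μ) * ((q + 1 : ℝ) - μ) * (x p - x q) = 0 := by
    intro p q h
    have h1 := H1 p (q + 1) (by omega) (by omega)
    have h2 := H1 q (p + 1) (by omega) (by omega)
    have h3 := Δ p (q + 1) (by omega)
    rw [Ss p] at h2
    push_cast at h1 h2 h3
    linear_combination ((p + 1 : ℝ) - μ) * h1 - ((q + 1 : ℝ) - μ) * h2 + h3 - h1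
  have link2 : ∀ p q : ℕ, p + q = k → 0 < p → 0 < q →
      ((p : ℝ) - μ) * ((q : ℝ) - μ) * (x p - x q) = 0 := by
    intro p q h hp hq
    have h1 := H1 p q h hq
    have h2 := H1 q p (by omega) hp
    have h3 := Δ p q h
    linear_combination ((p : ℝ) - μ) * h1 - ((q : ℝ) - μ) * h2 + h3
  have step : ∀ p q : ℕ, p + 2 + q = k → (p + 1 : ℝ) ≠ μ → (q + 2 : ℝ) ≠ μ → (q + 1 : ℝ) ≠ μ →
      x p = x (p + 1) := by
    intro p q h n1 n2 n3
    have h1 := link1 p (q + 1) (by omega)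
    have h2 := link2 (p + 1) (q + 1) (by omega) (by omega) (by omega)
    push_cast at h1 h2
    have m1 := sub_ne_zero.2 n1
    have m2 : (q : ℝ) + 1 + 1 - μ ≠ 0 := fun h => n2 (by linarith)
    have m3 := sub_ne_zero.2 n3
    have e1 := (mul_eq_zero.1 h1).resolve_left (mul_ne_zero m1 m2)
    have e2 := (mul_eq_zero.1 h2).resolve_left (mul_ne_zero m1 m3)
    linarith
  have Szero : ∀ a b : ℕ, a ≤ b → (∀ p, a ≤ p → p < b → x p = 0) → S b = S a := by
    intro a b hab
    induction b, hab using Nat.le_induction with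
    | base => intro _; rfl
    | succ b hb ih =>
      intro h
      rw [Ss, h b hb (by omega), ih fun p h1 h2 => h p h1 (by omega), add_zero]
  have Sconst : ∀ b : ℕ, (∀ p < b, x p = x 0) → S b = b * x 0 := by
    intro b
    induction b with
    | zero => simp [S0]
    | succ b ih =>
      intro h
      rw [Ss, ih fun p hp => h p (by omega), h b (by omega)]; push_cast; ring
  by_cases hμ : ∃ t : ℕ, 1 ≤ t ∧ t ≤ k ∧ (t : ℝ) = μ
  swap
  · have hne : ∀ t : ℕ, 1 ≤ t → t ≤ k → (t : ℝ) ≠ μ := fun t h1 h2 h3 => hμ ⟨t, h1, h2, h3⟩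
    have all := eq_of_step x 0 k fun p _ hp => by
      obtain ⟨q, hq⟩ : ∃ q, p + 2 + q = k := ⟨k - p - 2, by omega⟩
      have a1 := hne (p + 1) (by omega) (by omega)
      have a2 := hne (q + 2) (by omega) (by omega)
      have a3 := hne (q + 1) (by omega) (by omega)
      push_cast at a1 a2 a3
      exact step p q hq a1 a2 a3
    intro j hj
    rw [all j (by omega) hj, ← all _ (by omega) (by omega : (k + 1) / 2 - 1 < k), hc]
  obtain ⟨t, ht1, htk, rfl⟩ := hμ
  have step' : ∀ p q : ℕ, p + 2 + q = k → p + 1 ≠ t → q + 2 ≠ t → q + 1 ≠ t →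
      x p = x (p + 1) := fun p q h a b c =>
    step p q h (by exact_mod_cast a) (by exact_mod_cast b) (by exact_mod_cast c)
  have piece : ∀ a b : ℕ, b ≤ k → (∀ p, a ≤ p → p + 1 < b → p + 1 ≠ t ∧ k - p ≠ t ∧ k - p ≠ t + 1) →
      ∀ p, a ≤ p → p < b → x p = x a := fun a b hb h =>
    eq_of_step x a b fun p h1 h2 => by
      have := h p h1 h2
      exact step' p (k - p - 2) (by omega) (by omega) (by omega) (by omega)
  have hSk0 : S k = 0 := (mul_eq_zero.1 hSk).resolve_left (by positivity)
  have hSt0 : S t = 0 := by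
    have := H1 (k - t) t (by omega) (by omega)
    rw [← this]; ring
  have ends : 2 ≤ t → t < k → x 0 = x (k - 1) := by
    intro h1 h2
    have h := link1 0 (k - 1) (by omega)
    have e : ((k - 1 : ℕ) : ℝ) = k - 1 := by rw [Nat.cast_sub hk]; simp
    rw [e] at h
    have a1 : (t : ℝ) ≥ 2 := by exact_mod_cast h1
    have a2 : (t : ℝ) < k := by exact_mod_cast h2
    have := (mul_eq_zero.1 h).resolve_left
      (mul_ne_zero (by push_cast; linarith) (by linarith))
    linarith
  rcases le_or_gt (2 * t) k with h2t | h2t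
  · -- `x` is constant on `[0, t)`, `[t, k - t)` and `(k - t, k)`.
    have p1 := piece 0 t htk fun p _ _ => by omega
    have x0 : x 0 = 0 := by
      have := Sconst t fun p hp => p1 p (by omega) hp
      rw [hSt0] at this
      exact (mul_eq_zero.1 this.symm).resolve_left (by positivity)
    have z1 : ∀ p < t, x p = 0 := fun p hp => (p1 p (by omega) hp).trans x0
    have p2 := piece t (k - t) (by omega) fun p _ _ => by omega
    have z2 : ∀ p, t ≤ p → p < k - t → x p = 0 := by
      intro p h1 h2
      rw [p2 p h1 h2, ← p2 ((k + 1) / 2 - 1) (by omega) (by omega), hc]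
    have p3 := piece (k - t + 1) k le_rfl fun p _ _ => by omega
    have z3 : ∀ p, k - t + 1 ≤ p → p < k → x p = 0 := by
      intro p h1 h2
      rw [p3 p h1 h2, ← p3 (k - 1) (by omega) (by omega), ← ends (by omega) (by omega), x0]
    have z4 : x (k - t) = 0 := by
      have a := Szero 0 (k - t) (by omega) fun p _ hp => by
        rcases lt_or_ge p t with h | h
        · exact z1 p h
        · exact z2 p h hp
      have b := Szero (k - t + 1) k (by omega) z3
      rw [Ss, a, S0, hSk0] at b
      linarith
    intro j hj
    rcases lt_or_ge j t with h | h
    · exact z1 j h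
    rcases lt_trichotomy j (k - t) with h' | h' | h'
    · exact z2 j h h'
    · rw [h', z4]
    · exact z3 j h' hj
  · -- With `s = k - t`, `x` is constant on `[0, s)`, `(s, t)` and `[t, k)`.
    obtain ⟨s, hs⟩ : ∃ s, s + t = k := ⟨k - t, by omega⟩
    have p1 := piece 0 s (by omega) fun p _ _ => by omega
    have p2 := piece (s + 1) t htk fun p _ _ => by omega
    have p3 := piece t k le_rfl fun p _ _ => by omega
    have z3 : ∀ p, t ≤ p → p < k → x p = 0 := by
      have aux : ∀ d, t + d ≤ k → S (t + d) = d * x t := by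
        intro d
        induction d with
        | zero => intro _; simp [hSt0]
        | succ d ih =>
          intro h
          rw [← add_assoc, Ss, ih (by omega), p3 (t + d) (by omega) (by omega)]
          push_cast; ring
      intro p h1 h2
      have e := aux s (by omega)
      rw [add_comm, hs, hSk0] at e
      have hs0 : (s : ℝ) ≠ 0 := by
        have : s ≠ 0 := by omega
        exact_mod_cast this
      rw [p3 p h1 h2]
      exact (mul_eq_zero.1 e.symm).resolve_left hs0
    have z1 : ∀ p < s, x p = 0 := by
      intro p hp
      rw [p1 p (by omega) hp, ends (by omega) (by omega), z3 _ (by omega) (by omega)]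
    have Ss0 : S s = 0 := (Szero 0 s (by omega) fun p _ hp => z1 p hp).trans S0
    have key : x s = 0 ∧ ∀ p, s + 1 ≤ p → p < t → x p = 0 := by
      by_cases hcs : (k + 1) / 2 - 1 = s
      · rw [hcs] at hc
        refine ⟨hc, fun p h1 h2 => ?_⟩
        -- Here the interval `(s, t)` has at most one element.
        obtain rfl : p = s + 1 := by omega
        obtain rfl : t = s + 1 + 1 := by omega
        rw [Ss, Ss, Ss0, hc] at hSt0
        linarith
      · have z2 : ∀ p, s + 1 ≤ p → p < t → x p = 0 := by
          intro p h1 h2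
          rw [p2 p h1 h2, ← p2 ((k + 1) / 2 - 1) (by omega) (by omega), hc]
        refine ⟨?_, z2⟩
        have := Szero (s + 1) t (by omega) z2
        rw [Ss, Ss0, hSt0] at this
        linarith
    intro j hj
    rcases lt_or_ge j t with h | h
    · rcases lt_trichotomy j s with h' | h' | h'
      · exact z1 j h'
      · rw [h', key.1]
      · exact key.2 j h' h
    · exact z3 j h hj

/-- A solution of `(L_A - μ) w = d e_κ̄` that vanishes at the terminal vertex has `d = 0`: row `k`
kills `w` at the dominating vertex, whose row then gives `∑ w = 0`, and summing all rows gives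
`d = -μ ∑ w`. (For `k = 2`, where `κ̄` is the dominating vertex, `w = 0` directly.) -/
lemma antireg_terminal (k : ℕ) (hk : 2 ≤ k) (μ d : ℝ) (w : ℕ → ℝ)
    (H : ∀ j < k, rowA k μ w j = if j = (k + 1) / 2 - 1 then d else 0) (hw : w (k - 1) = 0) :
    d = 0 := by
  have h1 := H (k - 1) (by omega)
  rw [if_neg (by omega), rowA, hw, show k - (k - 1) = 1 by omega] at h1
  have w0 : w 0 = 0 := by simpa using h1
  have h0 := H 0 (by omega)
  rw [rowA, w0] at h0
  rcases Nat.lt_or_ge 2 k with h | h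
  · rw [if_neg (by omega)] at h0
    have hs := sum_rowA k μ w
    rw [Finset.sum_congr rfl fun j hj => H j (Finset.mem_range.1 hj), Finset.sum_ite_eq',
      if_pos (Finset.mem_range.2 (by omega))] at hs
    simp only [mul_zero, zero_sub, neg_eq_zero, Nat.sub_zero] at h0
    rw [hs, h0, mul_zero]
  · obtain rfl : k = 2 := by omega
    simp [Finset.sum_range_succ, w0] at h0 hw
    linarith

/-! ### The chain of copies -/

/-- The block form of `𝓛 x = μ x`: `X i j` is the entry of `x` at vertex `j` of copy `i` (both
0-indexed), and `D i` is the difference of `x` across the edge joining copies `i - 1` and `i`,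
set to zero at the two free ends of the chain. -/
structure ChainEq (n k : ℕ) (μ : ℝ) (X : ℕ → ℕ → ℝ) (D : ℕ → ℝ) : Prop where
  row : ∀ i < n, ∀ j < k, rowA k μ (X i) j =
    (if j = (k + 1) / 2 - 1 then D i else 0) - (if j = k - 1 then D (i + 1) else 0)
  first : D 0 = 0
  last : D n = 0
  mid : ∀ i, i + 1 < n → D (i + 1) = X i (k - 1) - X (i + 1) ((k + 1) / 2 - 1)

/-- A solution of the block equations is determined by one entry, whose position depends only on
`μ`. -/
lemma ChainEq.determined (n k : ℕ) (hk : 2 ≤ k) (hn : 1 ≤ n) (μ : ℝ) :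
    ∃ i0 < n, ∃ j0 < k, ∀ X D, ChainEq n k μ X D → X i0 j0 = 0 → ∀ i < n, ∀ j < k, X i j = 0 := by
  by_cases hu : ∃ u : ℕ → ℝ, (∀ j < k, rowA k μ u j = 0) ∧ u (k - 1) = 0 ∧ ∃ j < k, u j ≠ 0
  · -- Pairing every copy with `u` shows that all `D i` vanish; then each copy carries an eigenvector
    -- of `L_A`, and vanishing at `κ̄` propagates from the first copy to the last.
    obtain ⟨u, hu, huk, j1, hj1, hj1'⟩ := hu
    have huc : u ((k + 1) / 2 - 1) ≠ 0 := fun h =>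
      hj1' (antireg_center k (by omega) μ u hu h j1 hj1)
    refine ⟨0, by omega, (k + 1) / 2 - 1, by omega, fun X D hX h0 => ?_⟩
    have hD : ∀ i < n, D i = 0 := by
      intro i hi
      have e := rowA_pair k μ u (X i)
      rw [Finset.sum_congr rfl fun j hj => by rw [hX.row i hi j (Finset.mem_range.1 hj)],
        Finset.sum_eq_zero (s := Finset.range k) (f := fun j => X i j * rowA k μ u j)
          fun j hj => by rw [hu j (Finset.mem_range.1 hj), mul_zero]] at e
      simp only [mul_sub, mul_ite, mul_zero, Finset.sum_sub_distrib, Finset.sum_ite_eq',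
        Finset.mem_range] at e
      rw [if_pos (by omega), if_pos (by omega), huk, zero_mul, sub_zero] at e
      exact (mul_eq_zero.1 e).resolve_left huc
    have hD' : ∀ i ≤ n, D i = 0 := fun i hi => by
      rcases hi.lt_or_eq with h | rfl
      · exact hD i h
      · exact hX.last
    have hrow : ∀ i < n, ∀ j < k, rowA k μ (X i) j = 0 := fun i hi j hj => by
      rw [hX.row i hi j hj, hD' i hi.le, hD' (i + 1) hi]; simp
    intro i
    induction i with
    | zero => intro hi; exact antireg_center k (by omega) μ (X 0) (hrow 0 hi) h0
    | succ i ih =>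
      intro hi
      refine antireg_center k (by omega) μ _ (hrow _ hi) ?_
      have m := hX.mid i hi
      rw [hD' _ hi.le, ih (by omega) (k - 1) (by omega)] at m
      linarith
  · -- Otherwise vanishing at the terminal vertex propagates from the last copy to the first.
    have hB : ∀ w : ℕ → ℝ, (∀ j < k, rowA k μ w j = 0) → w (k - 1) = 0 → ∀ j < k, w j = 0 := by
      intro w h1 h2 j hj
      by_contra h
      exact hu ⟨w, h1, h2, j, hj, h⟩
    refine ⟨n - 1, by omega, k - 1, by omega, fun X D hX h0 => ?_⟩
    have main : ∀ i < n, D (i + 1) = 0 → X i (k - 1) = 0 →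
        D i = 0 ∧ ∀ j < k, X i j = 0 := by
      intro i hi hd hx
      have hr : ∀ j < k, rowA k μ (X i) j = if j = (k + 1) / 2 - 1 then D i else 0 :=
        fun j hj => by rw [hX.row i hi j hj, hd]; simp
      have d0 := antireg_terminal k hk μ _ _ hr hx
      refine ⟨d0, hB _ (fun j hj => ?_) hx⟩
      rw [hr j hj, d0]; simp
    have all : ∀ m i, i + 1 + m = n → D i = 0 ∧ ∀ j < k, X i j = 0 := by
      intro m
      induction m with
      | zero =>
        intro i hi
        obtain rfl : n = i + 1 := by omega
        exact main i (by omega) hX.last h0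
      | succ m ih =>
        intro i hi
        have h := ih (i + 1) (by omega)
        have hm := hX.mid i (by omega)
        rw [h.1, h.2 _ (by omega)] at hm
        exact main i (by omega) h.1 (by linarith)
    intro i hi
    exact (all (n - 1 - i) i (by omega)).2

/-! ### The matrix `𝓛` in block form -/

/-- Adding a loop at every vertex `i` with `2 i < k` (0-indexed) makes the neighbourhood of `i` the
initial segment `{0, …, k - i - 1}` without changing the Laplacian, so the diagonal term becomes
`k - i`. -/
lemma antiregLap_apply (k : ℕ) (i j : Fin k) :
    antiregLap k i j = (if i = j then ((k : ℝ) - i) else 0) - if (j : ℕ) < k - i then 1 else 0 := by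
  simp only [antiregLap, Matrix.of_apply]
  by_cases h : i = j
  · subst h
    rw [if_pos rfl, if_pos rfl]
    have e : (Finset.univ.filter fun m : Fin k => m ≠ i ∧ i.val + m.val + 2 ≤ k + 1) =
        (Finset.univ.filter fun m : Fin k => (m : ℕ) < k - i).erase i := by
      ext m
      simp only [Finset.mem_filter, Finset.mem_univ, true_and, Finset.mem_erase]
      have := i.isLt
      constructor <;> rintro ⟨h1, h2⟩ <;> exact ⟨h1, by omega⟩
    have hc : (Finset.univ.filter fun m : Fin k => (m : ℕ) < k - i).card = k - i := by
      rw [Fin.card_filter_val_lt]; omega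
    have hi : ((k - i : ℕ) : ℝ) = (k : ℝ) - i := Nat.cast_sub i.isLt.le
    rw [e]
    split_ifs with h
    · rw [Finset.card_erase_of_mem (by simpa using h), hc, Nat.cast_sub (by omega), hi]
      simp
    · rw [Finset.erase_eq_of_notMem (by simpa using h), hc, hi]
      simp
  · have := i.isLt
    rw [if_neg h, if_neg h, zero_sub]
    by_cases h' : (j : ℕ) < k - i
    · rw [if_pos (by omega), if_pos h']
    · rw [if_neg (by omega), if_neg h', neg_zero]

lemma antiregLap_isSymm (k : ℕ) : (antiregLap k).IsSymm := by
  ext i j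
  rw [Matrix.transpose_apply, antiregLap_apply, antiregLap_apply]
  by_cases h : i = j
  · subst h; rfl
  · have := i.isLt
    have := j.isLt
    rw [if_neg h, if_neg (Ne.symm h)]
    congr 2
    exact propext (by omega)

lemma interLap_isHermitian (n k : ℕ) (hk : 2 ≤ k) : (interLap n k hk).IsHermitian := by
  rw [Matrix.IsHermitian, Matrix.conjTranspose_eq_transpose_of_trivial]
  ext a b
  have h := (antiregLap_isSymm k).apply
  simp only [interLap, copiesLap, Matrix.transpose_apply, Matrix.add_apply,
    Matrix.kroneckerMap_apply, Matrix.sum_apply, Matrix.vecMulVec_apply]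
  rw [h, Matrix.one_apply, Matrix.one_apply]
  simp only [eq_comm (a := b.1)]
  congr 1
  exact Finset.sum_congr rfl fun _ _ => mul_comm _ _

/-- A vector on `Fin n × Fin k`, extended by zero to `ℕ × ℕ`. -/
def extendZero {n k : ℕ} (x : Fin n × Fin k → ℝ) (i j : ℕ) : ℝ :=
  if h : i < n ∧ j < k then x (⟨i, h.1⟩, ⟨j, h.2⟩) else 0

lemma extendZero_fin {n k : ℕ} (x : Fin n × Fin k → ℝ) (i : Fin n) (j : Fin k) :
    extendZero x i j = x (i, j) := by
  simp [extendZero]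

/-- The pairing `z_i ⬝ x` of `x` with the edge joining copies `i - 1` and `i` (0-indexed), and `0`
when there is no such edge, i.e. for `i = 0` and `i ≥ n`. -/
def jump {n k : ℕ} (x : Fin n × Fin k → ℝ) (i : ℕ) : ℝ :=
  if 0 < i ∧ i < n then
    extendZero x (i - 1) (k - 1) - extendZero x i ((k + 1) / 2 - 1) else 0

lemma zvec_dotProduct (n k : ℕ) (hk : 2 ≤ k) (p : Fin (n - 1)) (x : Fin n × Fin k → ℝ) :
    zvec n k hk p ⬝ᵥ x = jump x (p + 1) := by
  have hp := p.isLt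
  rw [jump, if_pos (by omega)]
  simp only [dotProduct, zvec, sub_mul, ite_mul, one_mul, zero_mul, Finset.sum_sub_distrib,
    Finset.sum_ite_eq', Finset.mem_univ, if_true]
  simp only [extendZero]
  rw [dif_pos (by omega), dif_pos (by omega)]
  rfl

lemma zvec_apply (n k : ℕ) (hk : 2 ≤ k) (p : Fin (n - 1)) (i : Fin n) (j : Fin k) :
    zvec n k hk p (i, j) = (if (p : ℕ) = i then (if (j : ℕ) = k - 1 then 1 else 0) else 0) -
      (if (p : ℕ) + 1 = i then (if (j : ℕ) = (k + 1) / 2 - 1 then 1 else 0) else 0) := by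
  simp only [zvec, Prod.mk.injEq, Fin.ext_iff, ite_and, eq_comm (a := (i : ℕ))]

lemma sum_zvec (n k : ℕ) (hk : 2 ≤ k) (x : Fin n × Fin k → ℝ) (i : Fin n) (j : Fin k) :
    ∑ p : Fin (n - 1), zvec n k hk p (i, j) * jump x (p + 1) =
      (if (j : ℕ) = k - 1 then jump x (i + 1) else 0) -
      (if (j : ℕ) = (k + 1) / 2 - 1 then jump x i else 0) := by
  have hi := i.isLt
  simp only [zvec_apply, sub_mul, Finset.sum_sub_distrib]
  rw [Fin.sum_univ_eq_sum_range (fun p => (if p = (i : ℕ) then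
      (if (j : ℕ) = k - 1 then (1 : ℝ) else 0) else 0) * jump x (p + 1)) (n - 1),
    Fin.sum_univ_eq_sum_range (fun p => (if p + 1 = (i : ℕ) then
      (if (j : ℕ) = (k + 1) / 2 - 1 then (1 : ℝ) else 0) else 0) * jump x (p + 1)) (n - 1)]
  congr 1
  · simp only [ite_mul, zero_mul, one_mul, Finset.sum_ite_eq', Finset.mem_range]
    by_cases h : (i : ℕ) < n - 1
    · rw [if_pos h]
    · have : jump x (i + 1) = 0 := by rw [jump, if_neg (by omega)]
      simp [h, this]
  · rcases Nat.eq_zero_or_pos (i : ℕ) with h | h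
    · have : jump x 0 = 0 := by rw [jump, if_neg (by omega)]
      simp [h, this]
    · obtain ⟨m, hm⟩ : ∃ m, (i : ℕ) = m + 1 := ⟨i - 1, by omega⟩
      have hm' : m < n - 1 := by omega
      simp only [hm, add_left_inj, ite_mul, zero_mul, one_mul, Finset.sum_ite_eq',
        Finset.mem_range, if_pos hm']

lemma antireg_row (n k : ℕ) (x : Fin n × Fin k → ℝ) (i : Fin n) (j : Fin k) (μ : ℝ) :
    ∑ l, antiregLap k j l * x (i, l) - μ * x (i, j) = rowA k μ (extendZero x i) j := by
  have hj := j.isLt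
  simp only [antiregLap_apply, sub_mul, Finset.sum_sub_distrib, ite_mul, zero_mul, one_mul,
    Finset.sum_ite_eq, Finset.mem_univ, if_true, rowA, ← extendZero_fin x]
  rw [Fin.sum_univ_eq_sum_range (fun l => if l < k - (j : ℕ) then extendZero x i l else 0) k,
    ← Finset.sum_filter]
  have : (Finset.range k).filter (fun l => l < k - (j : ℕ)) = Finset.range (k - j) := by
    ext l; simp only [Finset.mem_filter, Finset.mem_range]; omega
  rw [this]
  ring

lemma interLap_mulVec (n k : ℕ) (hk : 2 ≤ k) (x : Fin n × Fin k → ℝ) (i : Fin n) (j : Fin k) :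
    (interLap n k hk).mulVec x (i, j) = ∑ l, antiregLap k j l * x (i, l) +
      ∑ p : Fin (n - 1), zvec n k hk p (i, j) * jump x (p + 1) := by
  rw [interLap, Matrix.add_mulVec, Pi.add_apply, Matrix.sum_mulVec, Finset.sum_apply]
  congr 1
  · simp only [Matrix.mulVec, dotProduct, copiesLap, Matrix.kroneckerMap_apply,
      Fintype.sum_prod_type, Matrix.one_apply, ite_mul, one_mul, zero_mul]
    rw [Finset.sum_eq_single i]
    · simp
    · intro b _ hb; simp [Ne.symm hb]
    · simp
  · refine Finset.sum_congr rfl fun p _ => ?_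
    rw [Matrix.vecMulVec_mulVec, zvec_dotProduct]
    simp [mul_comm]

lemma chain_of_eigenvector (n k : ℕ) (hk : 2 ≤ k) (μ : ℝ) (x : Fin n × Fin k → ℝ)
    (hx : (interLap n k hk).mulVec x = μ • x) : ChainEq n k μ (extendZero x) (jump x) where
  row i hi j hj := by
    have h := congrFun hx (⟨i, hi⟩, ⟨j, hj⟩)
    rw [interLap_mulVec, sum_zvec, Pi.smul_apply, smul_eq_mul] at h
    have h2 := antireg_row n k x ⟨i, hi⟩ ⟨j, hj⟩ μ
    dsimp only at h h2
    linarith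
  first := by simp [jump]
  last := by simp [jump]
  mid i hi := by rw [jump, if_pos (by omega), Nat.add_sub_cancel]

/-- Every eigenvector for `μ` is determined by a single coordinate, whose position depends only
on `μ`. -/
lemma eigenspace_coord (n k : ℕ) (hk : 2 ≤ k) (hn : 1 ≤ n) (μ : ℝ) :
    ∃ q : Fin n × Fin k, ∀ x : Fin n × Fin k → ℝ,
      (interLap n k hk).mulVec x = μ • x → x q = 0 → x = 0 := by
  obtain ⟨i0, hi0, j0, hj0, h⟩ := ChainEq.determined n k hk hn μ
  refine ⟨(⟨i0, hi0⟩, ⟨j0, hj0⟩), fun x hx hq => ?_⟩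
  have := h _ _ (chain_of_eigenvector n k hk μ x hx)
    (by rw [← hq]; exact extendZero_fin x ⟨i0, hi0⟩ ⟨j0, hj0⟩)
  ext ⟨i, j⟩
  rw [← extendZero_fin x i j, this i i.isLt j j.isLt]; rfl

/-- Theorem: distinct eigenvalues.  The real symmetric matrix `𝓛`
(the Laplacian of `n` interconnected copies of the `k`-vertex antiregular graph)
has `n*k` eigenvalues, all distinct: its characteristic polynomial has `n*k`
roots and they are pairwise distinct. -/
theorem interLap_distinct_eigenvalues (k n : ℕ) (hk : 2 ≤ k) (hn : 1 ≤ n) :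
    Multiset.card (interLap n k hk).charpoly.roots = n * k ∧
    (interLap n k hk).charpoly.roots.Nodup := by
  have hA := interLap_isHermitian n k hk
  rw [hA.roots_charpoly_eq_eigenvalues]
  refine ⟨by simp, Multiset.Nodup.map ?_ Finset.univ.nodup⟩
  intro a b hab
  replace hab : hA.eigenvalues a = hA.eigenvalues b := by simpa using hab
  by_contra hne
  obtain ⟨q, hq⟩ := eigenspace_coord n k hk hn (hA.eigenvalues a)
  have ha := hA.mulVec_eigenvectorBasis a
  have hb := hA.mulVec_eigenvectorBasis b
  rw [← hab] at hb
  set v := hA.eigenvectorBasis a with hv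
  set w := hA.eigenvectorBasis b with hw
  have hli := hA.eigenvectorBasis.orthonormal
  have hvw : inner ℝ v w = 0 := hli.2 hne
  have hvv : ‖v‖ = 1 := hli.1 a
  -- the combination of the two eigenvectors that vanishes at `q`
  have hz := hq (w q • ⇑v - v q • ⇑w)
    (by rw [Matrix.mulVec_sub, Matrix.mulVec_smul, Matrix.mulVec_smul, ha, hb, smul_sub,
          smul_comm, smul_comm (v q)])
    (by simp [mul_comm])
  have hz' : w q • v - v q • w = 0 := by
    ext p; simpa using congrFun hz p
  have hwq : w q = 0 := by
    have := congrArg (fun y => inner ℝ v y) hz'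
    simpa [inner_sub_right, inner_smul_right, hvw, hvv] using this
  have hw0 := hq w hb hwq
  have : ‖w‖ = 1 := hli.1 b
  have hw1 : w = 0 := by ext p; simpa using congrFun hw0 p
  rw [hw1, norm_zero] at this
  exact zero_ne_one this
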